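/- Let n be a natural number, t₀ ∈ ℝ, and let C, p : ℝ → Matrix n n ℂ be matrix-valued functions differentiable at t₀ whose values C(t₀) and p(t₀) are invertible matrices. Define m(t) = C(t)⁻¹ · p(t) · C(t). Then writing C = C(t₀), p = p(t₀), γ̄ = C′·C⁻¹ and primes for derivatives at t₀: m(t₀)⁻¹·m′(t₀) + m′(t₀)·m(t₀)⁻¹ = C⁻¹ · ( p⁻¹·p′ + p′·p⁻¹ + p·γ̄·p⁻¹ − p⁻¹·γ̄·p ) · C. -/

import Mathlib

attribute [local instance] Matrix.normedAddCommGroup Matrix.normedSpace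

open Matrix

theorem aux_hasDerivAt_conj {R : Type*} [NormedRing R] [NormedAlgebra ℝ R] [HasSummableGeomSeries R]
    (C p : ℝ → R) (C' p' : R) (t₀ : ℝ) (hC : HasDerivAt C C' t₀) (hp : HasDerivAt p p' t₀)
    (hCu : IsUnit (C t₀)) :
    HasDerivAt (fun t => Ring.inverse (C t) * p t * C t)
      ((-(Ring.inverse (C t₀) * C' * Ring.inverse (C t₀)) * p t₀ + Ring.inverse (C t₀) * p') * C t₀
        + Ring.inverse (C t₀) * p t₀ * C') t₀ := by
  obtain ⟨u, hu⟩ := hCu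
  have h1 := hasFDerivAt_ringInverse (𝕜 := ℝ) u
  rw [hu] at h1
  have h2 := h1.comp_hasDerivAt t₀ hC
  have h3 : HasDerivAt (fun t => Ring.inverse (C t))
      (-(Ring.inverse (C t₀) * C' * Ring.inverse (C t₀))) t₀ := by
    rw [← hu, Ring.inverse_unit]
    simpa [Function.comp_def] using h2
  exact (h3.mul hp).mul hC

theorem aux_matrix (n : ℕ) (t₀ : ℝ)
    (C p : ℝ → Matrix (Fin n) (Fin n) ℂ) (C' p' : Matrix (Fin n) (Fin n) ℂ)
    (hC : HasDerivAt C C' t₀) (hp : HasDerivAt p p' t₀)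
    (hCu : IsUnit (C t₀)) :
    HasDerivAt (fun t => (C t)⁻¹ * p t * C t)
      ((-((C t₀)⁻¹ * C' * (C t₀)⁻¹) * p t₀ + (C t₀)⁻¹ * p') * C t₀
        + (C t₀)⁻¹ * p t₀ * C') t₀ := by
  simp only [nonsing_inv_eq_ringInverse]
  exact @aux_hasDerivAt_conj (Matrix (Fin n) (Fin n) ℂ) Matrix.linftyOpNormedRing
    Matrix.linftyOpNormedAlgebra (@instHasSummableGeomSeriesOfCompleteSpace _ Matrix.linftyOpNormedRing
      (inferInstanceAs (CompleteSpace (Fin n → Fin n → ℂ)))) C p C' p' t₀ hC hp hCu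

/-- If `m(t) = C(t)⁻¹ p(t) C(t)` with `C`, `p` differentiable at `t₀` and
`C(t₀)`, `p(t₀)` invertible, then at `t₀`:
`m⁻¹ m′ + m′ m⁻¹ = C⁻¹ (p⁻¹ p′ + p′ p⁻¹ + p γ̄ p⁻¹ − p⁻¹ γ̄ p) C`,
where `γ̄ = C′ C⁻¹`. -/
theorem deriv_sum_maurer_cartan_pullbacks (n : ℕ) (t₀ : ℝ)
    (C p : ℝ → Matrix (Fin n) (Fin n) ℂ)
    (hC : DifferentiableAt ℝ C t₀) (hp : DifferentiableAt ℝ p t₀)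
    (hCu : IsUnit (C t₀)) (hpu : IsUnit (p t₀)) :
    ((C t₀)⁻¹ * p t₀ * C t₀)⁻¹ * deriv (fun t => (C t)⁻¹ * p t * C t) t₀
      + deriv (fun t => (C t)⁻¹ * p t * C t) t₀ * ((C t₀)⁻¹ * p t₀ * C t₀)⁻¹
      = (C t₀)⁻¹ *
          ((p t₀)⁻¹ * deriv p t₀ + deriv p t₀ * (p t₀)⁻¹
            + p t₀ * (deriv C t₀ * (C t₀)⁻¹) * (p t₀)⁻¹
            - (p t₀)⁻¹ * (deriv C t₀ * (C t₀)⁻¹) * p t₀) * C t₀ := by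
  have hd : deriv (fun t => (C t)⁻¹ * p t * C t) t₀ =
      (-((C t₀)⁻¹ * deriv C t₀ * (C t₀)⁻¹) * p t₀ + (C t₀)⁻¹ * deriv p t₀) * C t₀
        + (C t₀)⁻¹ * p t₀ * deriv C t₀ :=
    (aux_matrix n t₀ C p _ _ hC.hasDerivAt hp.hasDerivAt hCu).deriv
  rw [hd]
  have hCd := (Matrix.isUnit_iff_isUnit_det _).1 hCu
  have hpd := (Matrix.isUnit_iff_isUnit_det _).1 hpu
  rw [Matrix.mul_inv_rev, Matrix.mul_inv_rev, Matrix.nonsing_inv_nonsing_inv _ hCd]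
  generalize deriv C t₀ = C'
  generalize deriv p t₀ = p'
  have a1 := Matrix.mul_nonsing_inv _ hCd
  have a2 := Matrix.nonsing_inv_mul _ hCd
  have b1 := Matrix.mul_nonsing_inv _ hpd
  have b2 := Matrix.nonsing_inv_mul _ hpd
  generalize (C t₀)⁻¹ = D at *
  generalize (p t₀)⁻¹ = q at *
  generalize C t₀ = c at *
  generalize p t₀ = r at *
  have a1' : ∀ x, c * (D * x) = x := fun x => by rw [← mul_assoc, a1, one_mul]
  have a2' : ∀ x, D * (c * x) = x := fun x => by rw [← mul_assoc, a2, one_mul]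
  have b1' : ∀ x, r * (q * x) = x := fun x => by rw [← mul_assoc, b1, one_mul]
  have b2' : ∀ x, q * (r * x) = x := fun x => by rw [← mul_assoc, b2, one_mul]
  simp only [mul_add, add_mul, mul_sub, sub_mul, neg_mul, mul_neg, mul_assoc, a1', a2', b1', b2',
    a1, a2, b1, b2, mul_one]
  abel
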